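/- Define h₁ := s∘i∘s, h₂ := s∘i∘s∘t, h₃ := i∘s∘t∘s, h₄ := i (maps on ℝ⁵). Then the hⱼ satisfy the Coxeter presentation relations of S₅: hⱼ∘hⱼ = id for j = 1,2,3,4; hⱼ∘hₖ∘hⱼ = hₖ∘hⱼ∘hₖ whenever |j−k| = 1; and hⱼ∘hₖ = hₖ∘hⱼ whenever |j−k| ≥ 2. Moreover i = h₄, t = h₁∘h₂, and s = (h₂∘h₁∘h₃∘h₄)∘(h₂∘h₁∘h₃∘h₄)∘h₂∘h₁. -/

import Mathlib

noncomputable section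

/-- Quintuplets `(z₁, z₂, z₃, z₄, z₀)` of real numbers. -/
abbrev R5 : Type := ℝ × ℝ × ℝ × ℝ × ℝ

/-- `s(z₁,z₂,z₃,z₄,z₀) = (z₀,z₄,z₃,z₂,z₁)`. -/
def sMap : R5 → R5 := fun z => (z.2.2.2.2, z.2.2.2.1, z.2.2.1, z.2.1, z.1)

/-- `t(z₁,z₂,z₃,z₄,z₀) = (z₂,−z₃−1,−z₁−1,z₄,z₀)`. -/
def tMap : R5 → R5 := fun z => (z.2.1, -z.2.2.1 - 1, -z.1 - 1, z.2.2.2.1, z.2.2.2.2)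

/-- `i(z₁,z₂,z₃,z₄,z₀) = (z₁,z₂,z₃,z₀,z₄)`. -/
def iMap : R5 → R5 := fun z => (z.1, z.2.1, z.2.2.1, z.2.2.2.2, z.2.2.2.1)

/-- `h₁ = s∘i∘s`. -/
def h1 : R5 → R5 := sMap ∘ iMap ∘ sMap
/-- `h₂ = s∘i∘s∘t`. -/
def h2 : R5 → R5 := sMap ∘ iMap ∘ sMap ∘ tMap
/-- `h₃ = i∘s∘t∘s`. -/
def h3 : R5 → R5 := iMap ∘ sMap ∘ tMap ∘ sMap
/-- `h₄ = i`. -/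
def h4 : R5 → R5 := iMap

theorem stmt3 :
    (h1 ∘ h1 = id ∧ h2 ∘ h2 = id ∧ h3 ∘ h3 = id ∧ h4 ∘ h4 = id) ∧
    (h1 ∘ h2 ∘ h1 = h2 ∘ h1 ∘ h2 ∧ h2 ∘ h3 ∘ h2 = h3 ∘ h2 ∘ h3 ∧
      h3 ∘ h4 ∘ h3 = h4 ∘ h3 ∘ h4) ∧
    (h1 ∘ h3 = h3 ∘ h1 ∧ h1 ∘ h4 = h4 ∘ h1 ∧ h2 ∘ h4 = h4 ∘ h2) ∧
    iMap = h4 ∧ tMap = h1 ∘ h2 ∧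
    sMap = (h2 ∘ h1 ∘ h3 ∘ h4) ∘ (h2 ∘ h1 ∘ h3 ∘ h4) ∘ h2 ∘ h1 := by
  refine ⟨⟨?_, ?_, ?_, ?_⟩, ⟨?_, ?_, ?_⟩, ⟨?_, ?_, ?_⟩, ?_, ?_, ?_⟩ <;>
    funext ⟨a, b, c, d, e⟩ <;>
    simp [h1, h2, h3, h4, sMap, tMap, iMap]
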